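/- Let n ≥ 2, let Ω, Ω̃ ⊆ ℝⁿ be bounded, uniformly convex open domains with smooth boundary, with the closure of Ω̃ contained in the open unit ball B₁(0). Then there exists a constant C₁₇ > 0, depending only on n, Ω, Ω̃ and diam(Ω), such that for every strictly convex solution (u, c) of the second boundary value problem for the Lorentz mean curvature operator on (Ω, Ω̃), the Legendre transform ũ of u satisfies sup_{y ∈ Ω̃} ‖D²ũ(y)‖ ≤ max_{y ∈ ∂Ω̃} ‖D²ũ(y)‖ + C₁₇, where ‖·‖ is the operator norm of the Hessian matrix. -/

import Mathlib

noncomputable section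
open MeasureTheory
open scoped RealInnerProductSpace

/-- The `i`-th standard basis vector of `ℝⁿ`. -/
def ev (n : ℕ) (i : Fin n) : EuclideanSpace ℝ (Fin n) := EuclideanSpace.single i 1

/-- Lorentz mean curvature operator `M[u] x = ∑ i, ∂ᵢ (∂ᵢ u / √(1 - |∇u|²)) x`. -/
def MOp (n : ℕ) (u : EuclideanSpace ℝ (Fin n) → ℝ) (x : EuclideanSpace ℝ (Fin n)) : ℝ :=
  ∑ i : Fin n,
    fderiv ℝ (fun y => fderiv ℝ u y (ev n i) / Real.sqrt (1 - ‖gradient u y‖ ^ 2)) x (ev n i)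

/-- Euclidean mean curvature operator `E[u] x = ∑ i, ∂ᵢ (∂ᵢ u / √(1 + |∇u|²)) x`. -/
def EOp (n : ℕ) (u : EuclideanSpace ℝ (Fin n) → ℝ) (x : EuclideanSpace ℝ (Fin n)) : ℝ :=
  ∑ i : Fin n,
    fderiv ℝ (fun y => fderiv ℝ u y (ev n i) / Real.sqrt (1 + ‖gradient u y‖ ^ 2)) x (ev n i)

/-- `Ω` is a uniformly convex domain with smooth boundary, exhibited by the defining
function `h` with uniform concavity constant `θ`:  `h` is smooth, `Ω = {h > 0}`,
`|∇h| = 1` on `∂Ω`, and `⟨ξ, D²h(p) ξ⟩ ≤ -θ |ξ|²` for all `p, ξ`. -/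
def IsUnifConvexDefFn (n : ℕ) (Ω : Set (EuclideanSpace ℝ (Fin n)))
    (h : EuclideanSpace ℝ (Fin n) → ℝ) (θ : ℝ) : Prop :=
  ContDiff ℝ (⊤ : ℕ∞) h ∧ Ω = {p | 0 < h p} ∧
  (∀ p ∈ frontier Ω, ‖gradient h p‖ = 1) ∧ 0 < θ ∧
  ∀ p ξ : EuclideanSpace ℝ (Fin n), ⟪ξ, fderiv ℝ (gradient h) p ξ⟫ ≤ -θ * ‖ξ‖ ^ 2

/-- `u` is smooth on the closure of `Ω` (i.e. on an open neighbourhood of it). -/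
def SmoothOnClosure (n : ℕ) (Ω : Set (EuclideanSpace ℝ (Fin n)))
    (u : EuclideanSpace ℝ (Fin n) → ℝ) : Prop :=
  ∃ U : Set (EuclideanSpace ℝ (Fin n)), IsOpen U ∧ closure Ω ⊆ U ∧ ContDiffOn ℝ (⊤ : ℕ∞) u U

/-- `(u, c)` is a strictly convex solution of the second boundary value problem for the
Lorentz mean curvature operator on `(Ω, Ω')`: `u` is smooth up to the boundary, spacelike
(`|∇u| < 1`), has positive definite Hessian `D²u` on the closure of `Ω`, its gradient map
is a bijection from `Ω` onto `Ω'`, and `M[u] = c` on `Ω`. -/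
def IsSol (n : ℕ) (Ω Ω' : Set (EuclideanSpace ℝ (Fin n)))
    (u : EuclideanSpace ℝ (Fin n) → ℝ) (c : ℝ) : Prop :=
  SmoothOnClosure n Ω u ∧
  (∀ x ∈ closure Ω, ‖gradient u x‖ < 1) ∧
  (∀ x ∈ closure Ω, ∀ ξ : EuclideanSpace ℝ (Fin n), ξ ≠ 0 →
      0 < ⟪ξ, fderiv ℝ (gradient u) x ξ⟫) ∧
  Set.BijOn (gradient u) Ω Ω' ∧
  (∀ x ∈ Ω, MOp n u x = c)

/-- `(u, c)` is a strictly convex solution of the second boundary value problem for the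
Euclidean mean curvature operator on `(Ω, Ω')`. -/
def IsSolE (n : ℕ) (Ω Ω' : Set (EuclideanSpace ℝ (Fin n)))
    (u : EuclideanSpace ℝ (Fin n) → ℝ) (c : ℝ) : Prop :=
  SmoothOnClosure n Ω u ∧
  (∀ x ∈ closure Ω, ∀ ξ : EuclideanSpace ℝ (Fin n), ξ ≠ 0 →
      0 < ⟪ξ, fderiv ℝ (gradient u) x ξ⟫) ∧
  Set.BijOn (gradient u) Ω Ω' ∧
  (∀ x ∈ Ω, EOp n u x = c)

/-- `ut` is the Legendre transform of `u`: it is smooth up to the boundary of `Ω'`,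
satisfies `ut (∇u x) = ⟨x, ∇u x⟩ - u x` and `∇ut (∇u x) = x` for `x ∈ Ω`. -/
def IsLegendre (n : ℕ) (Ω Ω' : Set (EuclideanSpace ℝ (Fin n)))
    (u ut : EuclideanSpace ℝ (Fin n) → ℝ) : Prop :=
  SmoothOnClosure n Ω' ut ∧
  (∀ x ∈ Ω, ut (gradient u x) = ⟪x, gradient u x⟫ - u x) ∧
  (∀ x ∈ Ω, gradient ut (gradient u x) = x)

/-- The coefficient matrix `s_ij(p) = (δ_ij + pᵢpⱼ/(1 - |p|²)) / √(1 - |p|²)` of the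
Lorentz mean curvature operator written in nondivergence form. -/
def sMat (n : ℕ) (p : EuclideanSpace ℝ (Fin n)) (i j : Fin n) : ℝ :=
  ((if i = j then (1 : ℝ) else 0) + p i * p j / (1 - ‖p‖ ^ 2)) / Real.sqrt (1 - ‖p‖ ^ 2)

/-- `Ω` has smooth boundary: it is the superlevel set of a smooth function whose
gradient does not vanish on the boundary. -/
def HasSmoothBoundary (n : ℕ) (Ω : Set (EuclideanSpace ℝ (Fin n))) : Prop :=
  ∃ g : EuclideanSpace ℝ (Fin n) → ℝ, ContDiff ℝ (⊤ : ℕ∞) g ∧ Ω = {p | 0 < g p} ∧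
    ∀ p ∈ frontier Ω, gradient g p ≠ 0

/-- `B(p) = Iₙ + p pᵀ / (v (1 + v))`, `v = √(1 - |p|²)`: the positive square root of the
inverse induced metric of a spacelike graph with gradient `p`. -/
def sqB (n : ℕ) (p : EuclideanSpace ℝ (Fin n)) : Matrix (Fin n) (Fin n) ℝ :=
  1 + (Real.sqrt (1 - ‖p‖ ^ 2) * (1 + Real.sqrt (1 - ‖p‖ ^ 2)))⁻¹ •
      Matrix.of fun i j => p i * p j

/-- `B'(p) = Iₙ - p pᵀ / (1 + v)`, `v = √(1 - |p|²)`: the square root of the induced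
metric of a spacelike graph with gradient `p`. -/
def sqBinv (n : ℕ) (p : EuclideanSpace ℝ (Fin n)) : Matrix (Fin n) (Fin n) ℝ :=
  1 - (1 + Real.sqrt (1 - ‖p‖ ^ 2))⁻¹ • Matrix.of fun i j => p i * p j

/-!
The idea is to apply the maximum principle on `Ω'` to `∂_ξ∂_ξ ũ + K ũ` for a unit vector `ξ`.
Factor the coefficients as `s = ∑ₖ bₖ ⊗ bₖ` and freeze `qₖ = (D²ũ)⁻¹ bₖ` at an interior maximum
`y₀`. By duality of quadratic forms, `∑ₖ (2⟨qₖ, bₖ⟩ - ∂_{qₖ}∂_{qₖ} ũ) ≤ c` near `y₀`, with equality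
at `y₀`, so the second `ξ`-derivative of the left-hand side is nonpositive there. Together with
`∂_{qₖ}∂_{qₖ} (∂_ξ∂_ξ ũ + K ũ) ≤ 0` this gives `K c + 2 ∑ₖ ⟨qₖ, ∂_ξ∂_ξ bₖ⟩ ≤ 0`. The identity matrix
is at most `s`, so the trace of `(D²ũ)⁻¹` is at most `c`, and Young's inequality for the form
`(D²ũ)⁻¹` yields `K ≤ 1 + ∑ₖ |∂_ξ∂_ξ bₖ|²`. For larger `K` the maximum is thus attained on the
boundary, and the oscillation of `ũ` is controlled because its gradient takes values in `Ω`.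
-/

open scoped Topology

section PositiveOperators

variable {E : Type*} [NormedAddCommGroup E] [InnerProductSpace ℝ E] {T : E →L[ℝ] E}

theorem isPositive_inverse (hT : T.IsPositive) (hinv : T.IsInvertible) :
    T.inverse.IsPositive := by
  refine (T.inverse.isPositive_iff).2 ⟨fun x y => ?_, fun x => ?_⟩
  · have h := hT.inner_left_eq_inner_right (T.inverse x) (T.inverse y)
    rw [hinv.self_apply_inverse, hinv.self_apply_inverse] at h
    exact h.symm
  · simpa only [hinv.self_apply_inverse] using hT.inner_nonneg_right (T.inverse x)

theorem inner_map_sq_le_of_isPositive (hT : T.IsPositive) (x y : E) :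
    ⟪x, T y⟫ ^ 2 ≤ ⟪x, T x⟫ * ⟪y, T y⟫ := by
  have h := LinearMap.BilinForm.apply_mul_apply_le_of_forall_zero_le
    ((innerₗ E).compl₂ T.toLinearMap) hT.inner_nonneg_right x y
  have hsymm : ⟪y, T x⟫ = ⟪x, T y⟫ := by
    rw [real_inner_comm, hT.inner_left_eq_inner_right]
  simpa [hsymm, sq] using h

theorem neg_two_inner_map_le_of_isPositive (hT : T.IsPositive) (x y : E) :
    -(2 * ⟪T x, y⟫) ≤ ⟪x, T x⟫ + ⟪y, T y⟫ := by
  have h := hT.inner_nonneg_right (x + y)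
  rw [map_add, inner_add_left, inner_add_right, inner_add_right,
    ← hT.inner_left_eq_inner_right x y, real_inner_comm (T x) y] at h
  linarith

/- Concave duality: `b ↦ ⟪b, T⁻¹ b⟫` is the supremum over `q` of the affine functions
`b ↦ 2 ⟪q, b⟫ - ⟪q, T q⟫`, attained at `q = T⁻¹ b`. -/
theorem two_inner_sub_inner_map_le_inner_inverse (hT : T.IsPositive) (hinv : T.IsInvertible)
    (q b : E) : 2 * ⟪q, b⟫ - ⟪q, T q⟫ ≤ ⟪b, T.inverse b⟫ := by
  have h := neg_two_inner_map_le_of_isPositive hT (T.inverse b) (-q)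
  simp only [hinv.self_apply_inverse, map_neg, inner_neg_left, inner_neg_right, neg_neg,
    real_inner_comm b] at h
  rw [real_inner_comm b q]
  linarith

theorem norm_le_of_isPositive_of_inner_map_le {R : ℝ} (hT : T.IsPositive) (hR : 0 ≤ R)
    (h : ∀ x, ‖x‖ = 1 → ⟪x, T x⟫ ≤ R) : ‖T‖ ≤ R := by
  rw [T.norm_eq_iSup_rayleighQuotient hT.isSymmetric]
  refine ciSup_le fun x => ?_
  rcases eq_or_ne x 0 with rfl | hx
  · simpa using hR
  have hunit : ‖(‖x‖⁻¹ : ℝ) • x‖ = 1 := norm_smul_inv_norm hx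
  rw [← T.rayleigh_smul x (inv_ne_zero (norm_ne_zero_iff.2 hx)),
    ContinuousLinearMap.rayleighQuotient, hunit, T.reApplyInnerSelf_apply, RCLike.re_to_real,
    real_inner_comm, one_pow, div_one, abs_of_nonneg (hT.inner_nonneg_right _)]
  exact h _ hunit

variable {ι : Type*} [Fintype ι] {b : ι → E}

theorem norm_map_sq_le_of_frame (hT : T.IsPositive) (hb : ∀ z, ‖z‖ ^ 2 ≤ ∑ k, ⟪b k, z⟫ ^ 2)
    (z : E) : ‖T z‖ ^ 2 ≤ (∑ k, ⟪b k, T (b k)⟫) * ⟪z, T z⟫ :=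
  calc ‖T z‖ ^ 2 ≤ ∑ k, ⟪b k, T z⟫ ^ 2 := hb (T z)
    _ ≤ ∑ k, ⟪b k, T (b k)⟫ * ⟪z, T z⟫ :=
      Finset.sum_le_sum fun k _ => inner_map_sq_le_of_isPositive hT (b k) z
    _ = (∑ k, ⟪b k, T (b k)⟫) * ⟪z, T z⟫ := (Finset.sum_mul ..).symm

theorem inner_map_self_le_of_frame (hT : T.IsPositive)
    (hb : ∀ z, ‖z‖ ^ 2 ≤ ∑ k, ⟪b k, z⟫ ^ 2) (z : E) :
    ⟪z, T z⟫ ≤ (∑ k, ⟪b k, T (b k)⟫) * ‖z‖ ^ 2 := by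
  set c := ∑ k, ⟪b k, T (b k)⟫
  have hc : 0 ≤ c := Finset.sum_nonneg fun k _ => hT.inner_nonneg_right (b k)
  rcases (hT.inner_nonneg_right z).eq_or_lt' with hz | hz
  · rw [hz]; positivity
  refine le_of_mul_le_mul_right ?_ hz
  calc ⟪z, T z⟫ * ⟪z, T z⟫ ≤ (‖z‖ * ‖T z‖) * (‖z‖ * ‖T z‖) :=
        mul_self_le_mul_self hz.le (real_inner_le_norm z (T z))
    _ = ‖z‖ ^ 2 * ‖T z‖ ^ 2 := by ring
    _ ≤ ‖z‖ ^ 2 * (c * ⟪z, T z⟫) := by gcongr; exact norm_map_sq_le_of_frame hT hb z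
    _ = c * ‖z‖ ^ 2 * ⟪z, T z⟫ := by ring

theorem sum_inner_map_pos_of_frame [Nontrivial E] (hT : T.IsPositive)
    (hinj : Function.Injective T) (hb : ∀ z, ‖z‖ ^ 2 ≤ ∑ k, ⟪b k, z⟫ ^ 2) :
    0 < ∑ k, ⟪b k, T (b k)⟫ := by
  obtain ⟨z, hz⟩ := exists_ne (0 : E)
  have hTz : 0 < ‖T z‖ := norm_pos_iff.2 ((map_ne_zero_iff T hinj).2 hz)
  exact pos_of_mul_pos_left ((pow_pos hTz 2).trans_le (norm_map_sq_le_of_frame hT hb z))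
    (hT.inner_nonneg_right z)

end PositiveOperators

section SecondDirectionalDerivative

variable {E F : Type*} [NormedAddCommGroup E] [NormedSpace ℝ E]
  [NormedAddCommGroup F] [NormedSpace ℝ F] {f : E → F} {y : E}

/-- The pure second directional derivative `∂_q ∂_q f`, as a function of the base point. -/
def secondDirDeriv (q : E) (f : E → F) (y : E) : F := iteratedFDeriv ℝ 2 f y fun _ => q

theorem secondDirDeriv_eq_fderiv_fderiv (q : E) (f : E → F) (y : E) :
    secondDirDeriv q f y = fderiv ℝ (fderiv ℝ f) y q q :=
  iteratedFDeriv_two_apply f y _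

theorem contDiffAt_fderiv_apply {m n : WithTop ℕ∞} (hf : ContDiffAt ℝ n f y)
    (hmn : m + 1 ≤ n) (q : E) : ContDiffAt ℝ m (fun z => fderiv ℝ f z q) y :=
  (hf.fderiv_right hmn).clm_apply contDiffAt_const

theorem contDiffAt_secondDirDeriv {m n : WithTop ℕ∞} (hf : ContDiffAt ℝ n f y)
    (hmn : m + 2 ≤ n) (q : E) : ContDiffAt ℝ m (secondDirDeriv q f) y :=
  (ContinuousMultilinearMap.apply ℝ (fun _ : Fin 2 => E) F fun _ => q).contDiff.contDiffAt.comp y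
    (hf.iteratedFDeriv_right (i := 2) hmn)

theorem secondDirDeriv_add {f g : E → F} (hf : ContDiffAt ℝ 2 f y) (hg : ContDiffAt ℝ 2 g y)
    (q : E) :
    secondDirDeriv q (fun z => f z + g z) y = secondDirDeriv q f y + secondDirDeriv q g y := by
  rw [secondDirDeriv, fun_iteratedFDeriv_add_apply hf hg]
  rfl

theorem secondDirDeriv_sub {f g : E → F} (hf : ContDiffAt ℝ 2 f y) (hg : ContDiffAt ℝ 2 g y)
    (q : E) :
    secondDirDeriv q (fun z => f z - g z) y = secondDirDeriv q f y - secondDirDeriv q g y := by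
  rw [secondDirDeriv, fun_iteratedFDeriv_sub_apply hf hg]
  rfl

theorem secondDirDeriv_sum {ι : Type*} {s : Finset ι} {f : ι → E → F}
    (hf : ∀ k ∈ s, ContDiffAt ℝ 2 (f k) y) (q : E) :
    secondDirDeriv q (fun z => ∑ k ∈ s, f k z) y = ∑ k ∈ s, secondDirDeriv q (f k) y := by
  rw [secondDirDeriv, iteratedFDeriv_fun_sum_apply hf, sum_apply]
  rfl

theorem secondDirDeriv_clm_apply {G : Type*} [NormedAddCommGroup G] [NormedSpace ℝ G]
    (L : F →L[ℝ] G) (hf : ContDiffAt ℝ 2 f y) (q : E) :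
    secondDirDeriv q (fun z => L (f z)) y = L (secondDirDeriv q f y) :=
  congrArg (fun T => T fun _ => q) (L.iteratedFDeriv_comp_left hf le_rfl)

theorem fderiv_fderiv_apply (hf : ContDiffAt ℝ 2 f y) (p q : E) :
    fderiv ℝ (fun z => fderiv ℝ f z q) y p = fderiv ℝ (fderiv ℝ f) y p q := by
  have hd : DifferentiableAt ℝ (fderiv ℝ f) y :=
    (hf.fderiv_right (m := 1) (by norm_num)).differentiableAt one_ne_zero
  simpa using congrArg (· p) (fderiv_clm_apply hd (differentiableAt_const q))

theorem fderiv_fderiv_apply_comm (hf : ContDiffAt ℝ 2 f y) (p q : E) :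
    fderiv ℝ (fun z => fderiv ℝ f z q) y p = fderiv ℝ (fun z => fderiv ℝ f z p) y q := by
  rw [fderiv_fderiv_apply hf, fderiv_fderiv_apply hf]
  exact (hf.isSymmSndFDerivAt (by simp)) p q

theorem secondDirDeriv_eq_fderiv_fderiv_apply (hf : ContDiffAt ℝ 2 f y) (q : E) :
    secondDirDeriv q f y = fderiv ℝ (fun z => fderiv ℝ f z q) y q := by
  rw [secondDirDeriv_eq_fderiv_fderiv, fderiv_fderiv_apply hf]

theorem fderiv_secondDirDeriv (hf : ContDiffAt ℝ 3 f y) (p q : E) :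
    fderiv ℝ (secondDirDeriv q f) y p = secondDirDeriv q (fun z => fderiv ℝ f z p) y := by
  have hf' : ∀ᶠ z in 𝓝 y, ContDiffAt ℝ 2 f z :=
    (hf.of_le (by norm_num)).eventually (by simp)
  have hp := contDiffAt_fderiv_apply (m := 2) (n := 3) hf (by norm_num) p
  have hq := contDiffAt_fderiv_apply (m := 2) (n := 3) hf (by norm_num) q
  calc fderiv ℝ (secondDirDeriv q f) y p
      = fderiv ℝ (fun z => fderiv ℝ (fun w => fderiv ℝ f w q) z q) y p := by
        congr 1
        exact Filter.EventuallyEq.fderiv_eq <|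
          hf'.mono fun z hz => secondDirDeriv_eq_fderiv_fderiv_apply hz q
    _ = fderiv ℝ (fun z => fderiv ℝ (fun w => fderiv ℝ f w q) z p) y q :=
        fderiv_fderiv_apply_comm hq p q
    _ = fderiv ℝ (fun z => fderiv ℝ (fun w => fderiv ℝ f w p) z q) y q := by
        congr 1
        exact Filter.EventuallyEq.fderiv_eq <|
          hf'.mono fun z hz => fderiv_fderiv_apply_comm hz p q
    _ = secondDirDeriv q (fun z => fderiv ℝ f z p) y :=
        (secondDirDeriv_eq_fderiv_fderiv_apply hp q).symm

theorem secondDirDeriv_comm (hf : ContDiffAt ℝ 4 f y) (p q : E) :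
    secondDirDeriv p (secondDirDeriv q f) y = secondDirDeriv q (secondDirDeriv p f) y := by
  have hf' : ∀ᶠ z in 𝓝 y, ContDiffAt ℝ 3 f z :=
    (hf.of_le (by norm_num)).eventually (by simp)
  have hp := contDiffAt_fderiv_apply (m := 3) (n := 4) hf (by norm_num) p
  have hqq := contDiffAt_secondDirDeriv (m := 2) (n := 4) hf (by norm_num) q
  calc secondDirDeriv p (secondDirDeriv q f) y
      = fderiv ℝ (fun z => fderiv ℝ (secondDirDeriv q f) z p) y p :=
        secondDirDeriv_eq_fderiv_fderiv_apply hqq p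
    _ = fderiv ℝ (secondDirDeriv q fun z => fderiv ℝ f z p) y p := by
        congr 1
        exact Filter.EventuallyEq.fderiv_eq <| hf'.mono fun z hz => fderiv_secondDirDeriv hz p q
    _ = secondDirDeriv q (fun z => fderiv ℝ (fun w => fderiv ℝ f w p) z p) y :=
        fderiv_secondDirDeriv hp p q
    _ = secondDirDeriv q (secondDirDeriv p f) y := by
        have h : secondDirDeriv p f =ᶠ[𝓝 y] fun z => fderiv ℝ (fun w => fderiv ℝ f w p) z p :=
          hf'.mono fun z hz => secondDirDeriv_eq_fderiv_fderiv_apply (hz.of_le (by norm_num)) p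
        simp only [secondDirDeriv_eq_fderiv_fderiv q, h.fderiv.fderiv_eq]

theorem norm_secondDirDeriv_le (f : E → F) (y q : E) :
    ‖secondDirDeriv q f y‖ ≤ ‖iteratedFDeriv ℝ 2 f y‖ * ‖q‖ ^ 2 := by
  simpa [secondDirDeriv] using (iteratedFDeriv ℝ 2 f y).le_opNorm fun _ => q

theorem deriv_comp_line (hf : DifferentiableAt ℝ f y) (x q : E) {t : ℝ} (hy : x + t • q = y) :
    deriv (fun s : ℝ => f (x + s • q)) t = fderiv ℝ f y q := by
  subst hy
  have hline : HasDerivAt (fun s : ℝ => x + s • q) q t := by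
    simpa using ((hasDerivAt_id t).smul_const q).const_add x
  exact (hf.hasFDerivAt.comp_hasDerivAt t hline).deriv

theorem deriv_deriv_comp_line (hf : ContDiffAt ℝ 2 f y) (x q : E) {t : ℝ}
    (hy : x + t • q = y) :
    deriv (deriv fun s : ℝ => f (x + s • q)) t = secondDirDeriv q f y := by
  have hline : ContinuousAt (fun s : ℝ => x + s • q) t := by fun_prop
  have hd : deriv (fun s : ℝ => f (x + s • q)) =ᶠ[𝓝 t] fun s => fderiv ℝ f (x + s • q) q := by
    rw [← hy] at hf
    filter_upwards [hline.eventually (hf.eventually (by simp))] with s hs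
    exact deriv_comp_line (hs.differentiableAt two_ne_zero) x q rfl
  have hq := contDiffAt_fderiv_apply (m := 1) (n := 2) hf (by norm_num) q
  rw [hd.deriv_eq, deriv_comp_line (hq.differentiableAt one_ne_zero) x q hy,
    secondDirDeriv_eq_fderiv_fderiv_apply hf]

theorem deriv_deriv_nonpos_of_isLocalMax {φ : ℝ → ℝ} {t : ℝ} (hφ : ContinuousAt φ t)
    (hmax : IsLocalMax φ t) : deriv (deriv φ) t ≤ 0 := by
  by_contra! hpos
  have hmin : IsLocalMin φ t := isLocalMin_of_deriv_deriv_pos hpos hmax.deriv_eq_zero hφ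
  have hconst : φ =ᶠ[𝓝 t] fun _ => φ t := by
    filter_upwards [hmax, hmin] with s hle hge using le_antisymm hle hge
  have hzero : deriv (deriv φ) t = 0 := by simp [hconst.deriv.deriv_eq]
  exact hpos.ne' hzero

theorem secondDirDeriv_nonpos_of_isLocalMax {g : E → ℝ} (hg : ContDiffAt ℝ 2 g y)
    (hmax : IsLocalMax g y) (q : E) : secondDirDeriv q g y ≤ 0 := by
  have hy : y + (0 : ℝ) • q = y := by simp
  have hline : Filter.Tendsto (fun s : ℝ => y + s • q) (𝓝 0) (𝓝 y) := by
    have h : ContinuousAt (fun s : ℝ => y + s • q) 0 := by fun_prop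
    simpa only [ContinuousAt, hy] using h
  have hmax' : IsLocalMax (fun s : ℝ => g (y + s • q)) 0 := by
    simpa only [IsLocalMax, IsMaxFilter, hy] using hline.eventually hmax
  have hcont : ContinuousAt (fun s : ℝ => g (y + s • q)) 0 :=
    hg.continuousAt.comp_of_eq (by fun_prop) hy
  rw [← deriv_deriv_comp_line hg y q hy]
  exact deriv_deriv_nonpos_of_isLocalMax hcont hmax'

theorem secondDirDeriv_add_mul_nonpos_of_isLocalMax {f : E → ℝ} {ξ : E} {K : ℝ}
    (hf : ContDiffAt ℝ 4 f y)
    (hmax : IsLocalMax (fun x => secondDirDeriv ξ f x + K * f x) y) (q : E) :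
    secondDirDeriv ξ (secondDirDeriv q f) y + K * secondDirDeriv q f y ≤ 0 := by
  have hf2 : ContDiffAt ℝ 2 f y := hf.of_le (by norm_num)
  have hdir : ContDiffAt ℝ 2 (secondDirDeriv ξ f) y :=
    contDiffAt_secondDirDeriv hf (by norm_num) ξ
  have hmul : ContDiffAt ℝ 2 (fun x => K * f x) y := contDiffAt_const.mul hf2
  calc secondDirDeriv ξ (secondDirDeriv q f) y + K * secondDirDeriv q f y
      = secondDirDeriv q (secondDirDeriv ξ f) y + secondDirDeriv q (fun x => K * f x) y := by
        rw [secondDirDeriv_comm hf]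
        congr 1
        exact (secondDirDeriv_clm_apply (K • ContinuousLinearMap.id ℝ ℝ) hf2 q).symm
    _ = secondDirDeriv q (fun x => secondDirDeriv ξ f x + K * f x) y :=
        (secondDirDeriv_add hdir hmul q).symm
    _ ≤ 0 := secondDirDeriv_nonpos_of_isLocalMax (hdir.add hmul) hmax q

theorem concaveOn_univ_of_secondDirDeriv_nonpos {g : E → ℝ} (hg : ContDiff ℝ 2 g)
    (h : ∀ y q, secondDirDeriv q g y ≤ 0) : ConcaveOn ℝ Set.univ g := by
  refine ⟨convex_univ, fun x _ y _ a b ha hb hab => ?_⟩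
  have hline : ContDiff ℝ 2 fun t : ℝ => g (x + t • (y - x)) := by fun_prop
  have hconc : ConcaveOn ℝ Set.univ fun t : ℝ => g (x + t • (y - x)) :=
    concaveOn_univ_of_deriv2_nonpos (hline.differentiable two_ne_zero)
      ((hline.deriv' (n := 1)).differentiable one_ne_zero) fun t => by
        simpa [deriv_deriv_comp_line hg.contDiffAt x (y - x) rfl] using h _ _
  have hcomb : a • x + b • y = x + b • (y - x) := by
    rw [eq_sub_of_add_eq hab]; module
  rw [hcomb]
  simpa using hconc.2 (Set.mem_univ 0) (Set.mem_univ 1) ha hb hab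

end SecondDirectionalDerivative

section GradientAndHessian

variable {E : Type*} [NormedAddCommGroup E] [InnerProductSpace ℝ E] [CompleteSpace E]
  {f : E → ℝ} {y : E}

theorem norm_gradient (f : E → ℝ) (y : E) : ‖gradient f y‖ = ‖fderiv ℝ f y‖ :=
  (InnerProductSpace.toDual ℝ E).symm.norm_map _

theorem contDiffAt_gradient {m n : WithTop ℕ∞} (hf : ContDiffAt ℝ n f y) (hmn : m + 1 ≤ n) :
    ContDiffAt ℝ m (gradient f) y :=
  (InnerProductSpace.toDual ℝ E).symm.contDiff.contDiffAt.comp y (hf.fderiv_right hmn)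

theorem differentiableAt_gradient (hf : ContDiffAt ℝ 2 f y) :
    DifferentiableAt ℝ (gradient f) y :=
  (contDiffAt_gradient (m := 1) hf (by norm_num)).differentiableAt one_ne_zero

theorem inner_fderiv_gradient_left (hf : ContDiffAt ℝ 2 f y) (p q : E) :
    ⟪fderiv ℝ (gradient f) y p, q⟫ = fderiv ℝ (fderiv ℝ f) y p q := by
  have h : fderiv ℝ (fun z => ⟪gradient f z, q⟫) y p = ⟪fderiv ℝ (gradient f) y p, q⟫ := by
    simpa using fderiv_inner_apply ℝ (differentiableAt_gradient hf) (differentiableAt_const q) p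
  rw [← h, ← fderiv_fderiv_apply hf]
  simp only [inner_gradient_left]

theorem inner_fderiv_gradient_self (hf : ContDiffAt ℝ 2 f y) (q : E) :
    ⟪q, fderiv ℝ (gradient f) y q⟫ = secondDirDeriv q f y := by
  rw [real_inner_comm, inner_fderiv_gradient_left hf, secondDirDeriv_eq_fderiv_fderiv]

theorem isSymmetric_fderiv_gradient (hf : ContDiffAt ℝ 2 f y) :
    (fderiv ℝ (gradient f) y).IsSymmetric := fun p q => by
  change ⟪fderiv ℝ (gradient f) y p, q⟫ = ⟪p, fderiv ℝ (gradient f) y q⟫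
  rw [real_inner_comm _ p, inner_fderiv_gradient_left hf, inner_fderiv_gradient_left hf]
  exact (hf.isSymmSndFDerivAt (by simp)) p q

theorem secondDirDeriv_le_norm_fderiv_gradient (hf : ContDiffAt ℝ 2 f y) {q : E}
    (hq : ‖q‖ = 1) : secondDirDeriv q f y ≤ ‖fderiv ℝ (gradient f) y‖ := by
  rw [← inner_fderiv_gradient_self hf]
  calc ⟪q, fderiv ℝ (gradient f) y q⟫ ≤ ‖q‖ * ‖fderiv ℝ (gradient f) y q‖ :=
        real_inner_le_norm _ _
    _ ≤ ‖fderiv ℝ (gradient f) y‖ := by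
        simpa [hq] using (fderiv ℝ (gradient f) y).le_opNorm q

theorem sub_le_of_norm_gradient_le {V : Set E} {R : ℝ} {x z : E} (hV : Convex ℝ V)
    (hf : ∀ y ∈ V, DifferentiableAt ℝ f y) (hfc : ContinuousOn f (closure V))
    (hR : ∀ y ∈ V, ‖gradient f y‖ ≤ R) (hx : x ∈ V) (hz : z ∈ closure V) :
    f z - f x ≤ R * ‖z - x‖ := by
  refine le_on_closure (s := V) (f := fun z => f z - f x) (g := fun z => R * ‖z - x‖)
    (fun w hw => ?_) (by fun_prop) (by fun_prop) hz
  exact (le_abs_self _).trans <| hV.norm_image_sub_le_of_norm_fderiv_le (𝕜 := ℝ) hf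
    (fun y hy => (norm_gradient f y).symm.le.trans (hR y hy)) hx hw

end GradientAndHessian

section DefiningFunction

variable {n : ℕ} {Ω : Set (EuclideanSpace ℝ (Fin n))} {h : EuclideanSpace ℝ (Fin n) → ℝ}
  {θ : ℝ}

theorem IsUnifConvexDefFn.isOpen (hΩ : IsUnifConvexDefFn n Ω h θ) : IsOpen Ω := by
  rw [hΩ.2.1]
  exact isOpen_lt continuous_const hΩ.1.continuous

theorem IsUnifConvexDefFn.convex (hΩ : IsUnifConvexDefFn n Ω h θ) : Convex ℝ Ω := by
  obtain ⟨hsmooth, rfl, -, hθ, hhess⟩ := hΩ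
  have hC2 : ContDiff ℝ 2 h := hsmooth.of_le (WithTop.coe_le_coe.2 le_top)
  have hconc : ConcaveOn ℝ Set.univ h :=
    concaveOn_univ_of_secondDirDeriv_nonpos hC2 fun y q => by
      rw [← inner_fderiv_gradient_self hC2.contDiffAt]
      exact (hhess y q).trans (by nlinarith [sq_nonneg ‖q‖])
  simpa using hconc.convex_gt 0

end DefiningFunction

section MaximumPrinciple

variable {E : Type*} [NormedAddCommGroup E] [InnerProductSpace ℝ E] [CompleteSpace E]
  {ι : Type*} [Fintype ι] {b : ι → E → E} {c : ℝ} {f : E → ℝ} {y ξ : E}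

/-- `f` has positive invertible Hessian at `x` and solves there the equation dual to a
quasilinear one, `∑ᵢⱼ sᵢⱼ(x) ((D²f x)⁻¹)ᵢⱼ = c`. The coefficients enter through a factorization
`s = ∑ₖ bₖ ⊗ bₖ`, which turns the left-hand side into `∑ₖ ⟨bₖ, (D²f)⁻¹ bₖ⟩`. -/
structure IsDualSolutionAt (b : ι → E → E) (c : ℝ) (f : E → ℝ) (x : E) : Prop where
  isPositive : (fderiv ℝ (gradient f) x).IsPositive
  isInvertible : (fderiv ℝ (gradient f) x).IsInvertible
  sum_inner_inverse : ∑ k, ⟪b k x, (fderiv ℝ (gradient f) x).inverse (b k x)⟫ = c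

namespace IsDualSolutionAt

theorem sum_two_inner_sub_secondDirDeriv_le (h : IsDualSolutionAt b c f y)
    (hf : ContDiffAt ℝ 2 f y) (q : ι → E) :
    ∑ k, (2 * ⟪q k, b k y⟫ - secondDirDeriv (q k) f y) ≤ c := by
  rw [← h.sum_inner_inverse]
  refine Finset.sum_le_sum fun k _ => ?_
  rw [← inner_fderiv_gradient_self hf]
  exact two_inner_sub_inner_map_le_inner_inverse h.isPositive h.isInvertible (q k) (b k y)

theorem secondDirDeriv_inverse (h : IsDualSolutionAt b c f y) (hf : ContDiffAt ℝ 2 f y) (p : E) :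
    secondDirDeriv ((fderiv ℝ (gradient f) y).inverse p) f y =
      ⟪p, (fderiv ℝ (gradient f) y).inverse p⟫ := by
  rw [← inner_fderiv_gradient_self hf, h.isInvertible.self_apply_inverse, real_inner_comm]

theorem sum_two_inner_sub_secondDirDeriv_eq (h : IsDualSolutionAt b c f y)
    (hf : ContDiffAt ℝ 2 f y) :
    ∑ k, (2 * ⟪(fderiv ℝ (gradient f) y).inverse (b k y), b k y⟫ -
      secondDirDeriv ((fderiv ℝ (gradient f) y).inverse (b k y)) f y) = c := by
  rw [← h.sum_inner_inverse]
  refine Finset.sum_congr rfl fun k _ => ?_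
  rw [h.secondDirDeriv_inverse hf, real_inner_comm]
  ring

/- Freezing `qₖ = (D²f y)⁻¹ bₖ(y)` replaces the inverse Hessian in the equation by a function that
is linear in `f` and touches `c` from below at `y`. -/
theorem sum_secondDirDeriv_nonpos (hf : ContDiffAt ℝ 4 f y)
    (hb : ∀ k, ContDiffAt ℝ 2 (b k) y) (h : ∀ᶠ x in 𝓝 y, IsDualSolutionAt b c f x) (ξ : E) :
    ∑ k, (2 * ⟪(fderiv ℝ (gradient f) y).inverse (b k y), secondDirDeriv ξ (b k) y⟫ -
      secondDirDeriv ξ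
        (secondDirDeriv ((fderiv ℝ (gradient f) y).inverse (b k y)) f) y) ≤ 0 := by
  set q : ι → E := fun k => (fderiv ℝ (gradient f) y).inverse (b k y)
  have hf2 : ∀ᶠ x in 𝓝 y, ContDiffAt ℝ 2 f x := (hf.of_le (by norm_num)).eventually (by simp)
  have htouch : IsLocalMax (fun x => ∑ k, (2 * ⟪q k, b k x⟫ - secondDirDeriv (q k) f x)) y := by
    filter_upwards [h, hf2] with x hx hfx
    exact (hx.sum_two_inner_sub_secondDirDeriv_le hfx q).trans_eq
      (h.self_of_nhds.sum_two_inner_sub_secondDirDeriv_eq hf2.self_of_nhds).symm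
  have hinner : ∀ k, ContDiffAt ℝ 2 (fun x => 2 * ⟪q k, b k x⟫) y := fun k =>
    contDiffAt_const.mul (contDiffAt_const.inner ℝ (hb k))
  have hdir : ∀ k, ContDiffAt ℝ 2 (secondDirDeriv (q k) f) y := fun k =>
    contDiffAt_secondDirDeriv hf (by norm_num) (q k)
  have hterm : ∀ k ∈ Finset.univ,
      ContDiffAt ℝ 2 (fun x => 2 * ⟪q k, b k x⟫ - secondDirDeriv (q k) f x) y :=
    fun k _ => (hinner k).sub (hdir k)
  have hmax := secondDirDeriv_nonpos_of_isLocalMax (ContDiffAt.sum hterm) htouch ξ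
  rw [secondDirDeriv_sum hterm] at hmax
  refine (Finset.sum_congr rfl fun k _ => ?_).trans_le hmax
  rw [secondDirDeriv_sub (hinner k) (hdir k)]
  congr 1
  exact (secondDirDeriv_clm_apply ((2 : ℝ) • innerSL ℝ (q k)) (hb k) ξ).symm

end IsDualSolutionAt

theorem le_one_add_sum_of_isLocalMax [Nontrivial E] {K : ℝ} (hf : ContDiffAt ℝ 4 f y)
    (hb : ∀ k, ContDiffAt ℝ 2 (b k) y) (hframe : ∀ z, ‖z‖ ^ 2 ≤ ∑ k, ⟪b k y, z⟫ ^ 2)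
    (h : ∀ᶠ x in 𝓝 y, IsDualSolutionAt b c f x)
    (hmax : IsLocalMax (fun x => secondDirDeriv ξ f x + K * f x) y) :
    K ≤ 1 + ∑ k, ‖secondDirDeriv ξ (b k) y‖ ^ 2 := by
  have hy := h.self_of_nhds
  set A := (fderiv ℝ (gradient f) y).inverse
  set d : ι → E := fun k => secondDirDeriv ξ (b k) y
  have hA : A.IsPositive := isPositive_inverse hy.isPositive hy.isInvertible
  have hc : ∑ k, ⟪b k y, A (b k y)⟫ = c := hy.sum_inner_inverse
  have hcpos : 0 < c := hc ▸ sum_inner_map_pos_of_frame hA hy.isInvertible.inverse.injective hframe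
  have hterm : ∀ k, (K - 1) * ⟪b k y, A (b k y)⟫ - c * ‖d k‖ ^ 2 ≤
      2 * ⟪A (b k y), d k⟫ - secondDirDeriv ξ (secondDirDeriv (A (b k y)) f) y := fun k => by
    have hsecond := secondDirDeriv_add_mul_nonpos_of_isLocalMax hf hmax (A (b k y))
    rw [hy.secondDirDeriv_inverse (hf.of_le (by norm_num))] at hsecond
    have hAMGM := neg_two_inner_map_le_of_isPositive hA (b k y) (d k)
    have hbound := hc ▸ inner_map_self_le_of_frame hA hframe (d k)
    linarith
  have hsum : (K - 1) * c - c * ∑ k, ‖d k‖ ^ 2 ≤ 0 := by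
    refine le_trans ?_ (IsDualSolutionAt.sum_secondDirDeriv_nonpos hf hb h ξ)
    rw [← hc, Finset.mul_sum, hc, Finset.mul_sum, ← Finset.sum_sub_distrib]
    exact Finset.sum_le_sum fun k _ => hterm k
  have hscaled : c * (K - 1) ≤ c * ∑ k, ‖d k‖ ^ 2 := by linarith
  linarith [le_of_mul_le_mul_left hscaled hcpos]

theorem bddAbove_image_norm_fderiv_gradient {s : Set E} (hs : IsCompact s)
    (hf : ∀ x ∈ s, ContDiffAt ℝ 2 f x) :
    BddAbove ((fun z => ‖fderiv ℝ (gradient f) z‖) '' s) := by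
  refine hs.bddAbove_image fun x hx => ContinuousAt.continuousWithinAt (ContinuousAt.norm ?_)
  have hgrad : ContDiffAt ℝ 1 (gradient f) x := contDiffAt_gradient (hf x hx) (by norm_num)
  exact (hgrad.fderiv_right (m := 0) (by norm_num)).continuousAt

section GlobalBound

variable {V : Set E} {M : ι → ℝ} {L : ℝ}

theorem exists_mem_frontier_secondDirDeriv_le (hV : IsOpen V) (hVc : IsCompact (closure V))
    (hf : ∀ x ∈ closure V, ContDiffAt ℝ 4 f x) (hb : ∀ k, ∀ x ∈ V, ContDiffAt ℝ 2 (b k) x)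
    (hM : ∀ k, ∀ x ∈ V, ‖iteratedFDeriv ℝ 2 (b k) x‖ ≤ M k)
    (hframe : ∀ x ∈ V, ∀ z, ‖z‖ ^ 2 ≤ ∑ k, ⟪b k x, z⟫ ^ 2)
    (h : ∀ x ∈ V, IsDualSolutionAt b c f x) (hL : ∀ z ∈ closure V, f z - f y ≤ L)
    (hy : y ∈ V) (hξ : ‖ξ‖ = 1) :
    ∃ z ∈ frontier V,
      secondDirDeriv ξ f y ≤ secondDirDeriv ξ f z + (2 + ∑ k, M k ^ 2) * L := by
  have : Nontrivial E := ⟨ξ, 0, norm_ne_zero_iff.1 (hξ ▸ one_ne_zero)⟩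
  set K := 2 + ∑ k, M k ^ 2 with hKdef
  have hK : 0 ≤ K := by positivity
  have hcont : ContinuousOn (fun x => secondDirDeriv ξ f x + K * f x) (closure V) := fun x hx =>
    ((contDiffAt_secondDirDeriv (m := 2) (hf x hx) (by norm_num) ξ).continuousAt.add
      (continuousAt_const.mul (hf x hx).continuousAt)).continuousWithinAt
  obtain ⟨z, hz, hmax⟩ := hVc.exists_isMaxOn ⟨y, subset_closure hy⟩ hcont
  have hzV : z ∉ V := fun hzV => by
    have hle : K ≤ 1 + ∑ k, ‖secondDirDeriv ξ (b k) z‖ ^ 2 :=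
      le_one_add_sum_of_isLocalMax (hf z hz) (fun k => hb k z hzV) (hframe z hzV)
        (Filter.eventually_of_mem (hV.mem_nhds hzV) h)
        ((hmax.on_subset subset_closure).isLocalMax (hV.mem_nhds hzV))
    have hsum : ∑ k, ‖secondDirDeriv ξ (b k) z‖ ^ 2 ≤ ∑ k, M k ^ 2 := by
      gcongr with k
      simpa [hξ] using (norm_secondDirDeriv_le (b k) z ξ).trans
        (mul_le_mul_of_nonneg_right (hM k z hzV) (sq_nonneg ‖ξ‖))
    linarith [hKdef]
  refine ⟨z, hV.frontier_eq ▸ ⟨hz, hzV⟩, ?_⟩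
  have hval : secondDirDeriv ξ f y + K * f y ≤ secondDirDeriv ξ f z + K * f z :=
    hmax (subset_closure hy)
  linarith [mul_le_mul_of_nonneg_left (hL z hz) hK]

theorem norm_fderiv_gradient_le_sSup_frontier_add (hV : IsOpen V) (hVc : IsCompact (closure V))
    (hf : ∀ x ∈ closure V, ContDiffAt ℝ 4 f x) (hb : ∀ k, ∀ x ∈ V, ContDiffAt ℝ 2 (b k) x)
    (hM : ∀ k, ∀ x ∈ V, ‖iteratedFDeriv ℝ 2 (b k) x‖ ≤ M k)
    (hframe : ∀ x ∈ V, ∀ z, ‖z‖ ^ 2 ≤ ∑ k, ⟪b k x, z⟫ ^ 2)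
    (h : ∀ x ∈ V, IsDualSolutionAt b c f x) (hL : ∀ z ∈ closure V, f z - f y ≤ L)
    (hy : y ∈ V) :
    ‖fderiv ℝ (gradient f) y‖ ≤
      sSup ((fun z => ‖fderiv ℝ (gradient f) z‖) '' frontier V) + (2 + ∑ k, M k ^ 2) * L := by
  have hf2 : ∀ x ∈ closure V, ContDiffAt ℝ 2 f x := fun x hx => (hf x hx).of_le (by norm_num)
  have hbdd : BddAbove ((fun z => ‖fderiv ℝ (gradient f) z‖) '' frontier V) :=
    bddAbove_image_norm_fderiv_gradient
      (hVc.of_isClosed_subset isClosed_frontier frontier_subset_closure)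
      fun x hx => hf2 x (frontier_subset_closure hx)
  have hS : 0 ≤ sSup ((fun z => ‖fderiv ℝ (gradient f) z‖) '' frontier V) :=
    Real.sSup_nonneg (Set.forall_mem_image.2 fun z _ => norm_nonneg _)
  have hL0 : 0 ≤ L := by simpa using hL y (subset_closure hy)
  refine norm_le_of_isPositive_of_inner_map_le (h y hy).isPositive (by positivity) fun ξ hξ => ?_
  rw [inner_fderiv_gradient_self (hf2 y (subset_closure hy))]
  obtain ⟨z, hz, hle⟩ :=
    exists_mem_frontier_secondDirDeriv_le hV hVc hf hb hM hframe h hL hy hξ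
  refine hle.trans (add_le_add_left ?_ _)
  exact (secondDirDeriv_le_norm_fderiv_gradient (hf2 z (frontier_subset_closure hz)) hξ).trans
    (le_csSup hbdd (Set.mem_image_of_mem _ hz))

end GlobalBound

end MaximumPrinciple

section LorentzCoefficients

theorem one_sub_norm_sq_pos {E : Type*} [SeminormedAddGroup E] {p : E} (hp : ‖p‖ < 1) :
    0 < 1 - ‖p‖ ^ 2 :=
  sub_pos.2 (pow_lt_one₀ (norm_nonneg p) hp two_ne_zero)

/-- The factor `(1 - |p|²)^(-1/4)`, whose square is the overall factor `1/√(1 - |p|²)` of the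
Lorentz coefficients. -/
def lorentzWeight {E : Type*} [Norm E] (p : E) : ℝ := (√√(1 - ‖p‖ ^ 2))⁻¹

theorem lorentzWeight_sq {E : Type*} [Norm E] (p : E) :
    lorentzWeight p ^ 2 = (√(1 - ‖p‖ ^ 2))⁻¹ := by
  rw [lorentzWeight, inv_pow, Real.sq_sqrt (Real.sqrt_nonneg _)]

theorem one_le_lorentzWeight {E : Type*} [SeminormedAddGroup E] {p : E} (hp : ‖p‖ < 1) :
    1 ≤ lorentzWeight p := by
  refine (one_le_inv₀ (Real.sqrt_pos.2 (Real.sqrt_pos.2 (one_sub_norm_sq_pos hp)))).2 ?_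
  rw [Real.sqrt_le_one, Real.sqrt_le_one]
  exact sub_le_self 1 (sq_nonneg ‖p‖)

variable {E : Type*} [NormedAddCommGroup E] [InnerProductSpace ℝ E] {p : E}

theorem hasFDerivAt_inner_div_sqrt_one_sub_norm_sq (hp : ‖p‖ < 1) (e : E) :
    HasFDerivAt (fun q => ⟪e, q⟫ / √(1 - ‖q‖ ^ 2))
      ((√(1 - ‖p‖ ^ 2))⁻¹ • (innerSL ℝ e + (⟪e, p⟫ / (1 - ‖p‖ ^ 2)) • innerSL ℝ p)) p := by
  have hpos := one_sub_norm_sq_pos hp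
  have hroot : √(1 - ‖p‖ ^ 2) ≠ 0 := (Real.sqrt_pos.2 hpos).ne'
  have hden := (((hasFDerivAt_id (𝕜 := ℝ) p).norm_sq).const_sub 1).sqrt hpos.ne'
  have hinv : HasFDerivAt (fun q => (√(1 - ‖q‖ ^ 2))⁻¹)
      (((√(1 - ‖p‖ ^ 2))⁻¹ / (1 - ‖p‖ ^ 2)) • innerSL ℝ p) p := by
    refine ((hasDerivAt_inv hroot).comp_hasFDerivAt p hden).congr_fderiv ?_
    ext z
    simp only [id_eq, one_div, mul_inv_rev, ContinuousLinearMap.comp_id, smul_neg, neg_smul,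
      neg_neg, smul_apply, coe_innerSL_apply, nsmul_eq_mul, Nat.cast_ofNat, smul_eq_mul]
    rw [Real.sq_sqrt hpos.le]
    field_simp
  simp only [div_eq_mul_inv (⟪e, _⟫)]
  refine ((innerSL ℝ e).hasFDerivAt.mul hinv).congr_fderiv ?_
  ext z
  simp only [coe_innerSL_apply, add_apply, smul_apply, smul_eq_mul, smul_add]
  ring

theorem contDiffAt_lorentzWeight {m : WithTop ℕ∞} (hp : ‖p‖ < 1) :
    ContDiffAt ℝ m lorentzWeight p := by
  have hpos := one_sub_norm_sq_pos hp
  have hsqrt : ContDiffAt ℝ m (fun q : E => √(1 - ‖q‖ ^ 2)) p :=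
    (contDiffAt_const.sub (contDiffAt_id.norm_sq ℝ)).sqrt hpos.ne'
  exact (hsqrt.sqrt (Real.sqrt_pos.2 hpos).ne').inv (Real.sqrt_pos.2 (Real.sqrt_pos.2 hpos)).ne'

end LorentzCoefficients

section LorentzFrame

variable {n : ℕ} {p : EuclideanSpace ℝ (Fin n)}

theorem inner_ev (z : EuclideanSpace ℝ (Fin n)) (i : Fin n) : ⟪z, ev n i⟫ = z i := by
  simp [ev, EuclideanSpace.inner_single_right]

theorem inner_ev_left (z : EuclideanSpace ℝ (Fin n)) (i : Fin n) : ⟪ev n i, z⟫ = z i := by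
  rw [real_inner_comm, inner_ev]

theorem sum_smul_ev (z : EuclideanSpace ℝ (Fin n)) : ∑ i, z i • ev n i = z := by
  simpa [ev] using (EuclideanSpace.basisFun (Fin n) ℝ).sum_repr z

theorem inner_map_self_eq_sum_sum (T : EuclideanSpace ℝ (Fin n) →L[ℝ] EuclideanSpace ℝ (Fin n))
    (z : EuclideanSpace ℝ (Fin n)) :
    ⟪z, T z⟫ = ∑ i, ∑ j, z i * z j * T (ev n i) j := by
  calc ⟪z, T z⟫ = ⟪∑ j, z j • ev n j, T (∑ i, z i • ev n i)⟫ := by rw [sum_smul_ev]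
    _ = ∑ i, ∑ j, z i * z j * T (ev n i) j := by
      simp only [map_sum, map_smul, inner_sum, sum_inner, real_inner_smul_left,
        real_inner_smul_right, inner_ev_left, mul_assoc]

/-- Vector fields `bₖ` with `s(p) = ∑ₖ bₖ(p) ⊗ bₖ(p)` for the matrix `s` of `sMat`: the multiples
`a eᵢ` of the basis vectors carry its identity part and `a³ p`, at the index `none`, its rank-one
part, where `a = (1 - |p|²)^(-1/4)`. -/
def lorentzFrame (n : ℕ) : Option (Fin n) → EuclideanSpace ℝ (Fin n) → EuclideanSpace ℝ (Fin n)
  | none, p => lorentzWeight p ^ 3 • p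
  | some i, p => lorentzWeight p • ev n i

theorem sum_lorentzFrame_mul (hp : ‖p‖ < 1) (i j : Fin n) :
    ∑ k, lorentzFrame n k p i * lorentzFrame n k p j = sMat n p i j := by
  have hpos := one_sub_norm_sq_pos hp
  have hfour : lorentzWeight p ^ 4 = (1 - ‖p‖ ^ 2)⁻¹ := by
    rw [show 4 = 2 * 2 from rfl, pow_mul, lorentzWeight_sq, inv_pow, Real.sq_sqrt hpos.le]
  have hdelta : ∑ k, ev n k i * ev n k j = if i = j then 1 else 0 := by
    simp [ev]
  calc ∑ k, lorentzFrame n k p i * lorentzFrame n k p j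
      = lorentzWeight p ^ 2 * (∑ k, ev n k i * ev n k j + p i * p j * lorentzWeight p ^ 4) := by
        simp only [Fintype.sum_option, lorentzFrame, PiLp.smul_apply, smul_eq_mul, mul_add,
          Finset.mul_sum]
        rw [add_comm]
        congr 1
        · exact Finset.sum_congr rfl fun k _ => by ring
        · ring
    _ = sMat n p i j := by
        rw [hdelta, hfour, lorentzWeight_sq, sMat]
        ring

theorem norm_sq_le_sum_inner_lorentzFrame_sq (hp : ‖p‖ < 1) (z : EuclideanSpace ℝ (Fin n)) :
    ‖z‖ ^ 2 ≤ ∑ k, ⟪lorentzFrame n k p, z⟫ ^ 2 := by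
  have hw : 1 ≤ lorentzWeight p ^ 2 := one_le_pow₀ (one_le_lorentzWeight hp)
  calc ‖z‖ ^ 2 ≤ lorentzWeight p ^ 2 * ‖z‖ ^ 2 := le_mul_of_one_le_left (sq_nonneg _) hw
    _ = ∑ i, ⟪lorentzFrame n (some i) p, z⟫ ^ 2 := by
        simp only [lorentzFrame, real_inner_smul_left, inner_ev_left, mul_pow,
          EuclideanSpace.real_norm_sq_eq, Finset.mul_sum]
    _ ≤ ∑ k, ⟪lorentzFrame n k p, z⟫ ^ 2 := by
        rw [Fintype.sum_option]
        exact le_add_of_nonneg_left (sq_nonneg _)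

theorem contDiffAt_lorentzFrame {m : WithTop ℕ∞} (k : Option (Fin n)) (hp : ‖p‖ < 1) :
    ContDiffAt ℝ m (lorentzFrame n k) p :=
  match k with
  | none => ((contDiffAt_lorentzWeight hp).pow 3).smul contDiffAt_id
  | some _ => (contDiffAt_lorentzWeight hp).smul contDiffAt_const

theorem exists_norm_iteratedFDeriv_lorentzFrame_le {s : Set (EuclideanSpace ℝ (Fin n))}
    (hs : IsCompact s) (hs1 : s ⊆ Metric.ball 0 1) (k : Option (Fin n)) :
    ∃ M, ∀ x ∈ s, ‖iteratedFDeriv ℝ 2 (lorentzFrame n k) x‖ ≤ M := by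
  refine hs.exists_bound_of_continuousOn fun x hx => ContinuousAt.continuousWithinAt ?_
  have hsmooth : ContDiffAt ℝ 2 (lorentzFrame n k) x :=
    contDiffAt_lorentzFrame k (mem_ball_zero_iff.1 (hs1 hx))
  exact (hsmooth.iteratedFDeriv_right (m := 0) (i := 2) (by norm_num)).continuousAt

variable {u : EuclideanSpace ℝ (Fin n) → ℝ} {x : EuclideanSpace ℝ (Fin n)}

theorem MOp_eq_sum_sMat_mul (hu : ContDiffAt ℝ 2 u x) (hx : ‖gradient u x‖ < 1) :
    MOp n u x = ∑ i, ∑ j, sMat n (gradient u x) i j * fderiv ℝ (gradient u) x (ev n i) j := by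
  refine Finset.sum_congr rfl fun i _ => ?_
  set p := gradient u x
  set z := fderiv ℝ (gradient u) x (ev n i)
  have hchain := (hasFDerivAt_inner_div_sqrt_one_sub_norm_sq hx (ev n i)).comp x
    (differentiableAt_gradient hu).hasFDerivAt
  have hfun : (fun y => fderiv ℝ u y (ev n i) / √(1 - ‖gradient u y‖ ^ 2)) =
      (fun q => ⟪ev n i, q⟫ / √(1 - ‖q‖ ^ 2)) ∘ gradient u := by
    funext y
    simp only [Function.comp_apply, ← inner_gradient_left, real_inner_comm (ev n i)]
  have hinner : ⟪p, z⟫ = ∑ j, p j * z j := by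
    simp [PiLp.inner_apply, mul_comm]
  rw [hfun, hchain.fderiv]
  calc _ = (√(1 - ‖p‖ ^ 2))⁻¹ * (z i + p i / (1 - ‖p‖ ^ 2) * ⟪p, z⟫) := by
        simp [inner_ev_left, z, mul_add, -inner_gradient_left]
    _ = (√(1 - ‖p‖ ^ 2))⁻¹ *
          ∑ j, ((if i = j then 1 else 0) + p i * p j / (1 - ‖p‖ ^ 2)) * z j := by
        simp only [hinner, add_mul, Finset.sum_add_distrib, ite_mul, one_mul, zero_mul,
          Finset.sum_ite_eq, Finset.mem_univ, if_true, Finset.mul_sum, div_mul_eq_mul_div,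
          mul_assoc]
    _ = ∑ j, sMat n p i j * z j := by
        rw [Finset.mul_sum]
        exact Finset.sum_congr rfl fun j _ => by rw [sMat]; ring

theorem MOp_eq_sum_inner_lorentzFrame (hu : ContDiffAt ℝ 2 u x) (hx : ‖gradient u x‖ < 1) :
    MOp n u x = ∑ k, ⟪lorentzFrame n k (gradient u x),
      fderiv ℝ (gradient u) x (lorentzFrame n k (gradient u x))⟫ := by
  rw [MOp_eq_sum_sMat_mul hu hx]
  simp only [← sum_lorentzFrame_mul hx, Finset.sum_mul, inner_map_self_eq_sum_sum]
  rw [Finset.sum_comm_cycle]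

end LorentzFrame

section LegendreTransform

variable {n : ℕ} {Ω Ω' : Set (EuclideanSpace ℝ (Fin n))} {u ut : EuclideanSpace ℝ (Fin n) → ℝ}
  {c : ℝ} {x y : EuclideanSpace ℝ (Fin n)}

theorem SmoothOnClosure.contDiffAt (hu : SmoothOnClosure n Ω u) (hx : x ∈ closure Ω) (m : ℕ) :
    ContDiffAt ℝ m u x := by
  obtain ⟨U, hU, hΩU, hsmooth⟩ := hu
  exact (hsmooth.contDiffAt (hU.mem_nhds (hΩU hx))).of_le (WithTop.coe_le_coe.2 le_top)

theorem IsSol.isPositive_fderiv_gradient (hsol : IsSol n Ω Ω' u c) (hx : x ∈ Ω) :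
    (fderiv ℝ (gradient u) x).IsPositive := by
  refine ⟨isSymmetric_fderiv_gradient (hsol.1.contDiffAt (subset_closure hx) 2), fun ξ => ?_⟩
  rw [ContinuousLinearMap.reApplyInnerSelf_apply, RCLike.re_to_real, real_inner_comm]
  obtain rfl | hξ := eq_or_ne ξ 0
  · simp
  · exact (hsol.2.2.1 x (subset_closure hx) ξ hξ).le

namespace IsLegendre

theorem gradient_mem (hleg : IsLegendre n Ω Ω' u ut) (hsol : IsSol n Ω Ω' u c) (hy : y ∈ Ω') :
    gradient ut y ∈ Ω := by
  obtain ⟨x, hx, rfl⟩ := hsol.2.2.2.1.surjOn hy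
  rwa [hleg.2.2 x hx]

theorem gradient_gradient (hleg : IsLegendre n Ω Ω' u ut) (hsol : IsSol n Ω Ω' u c)
    (hy : y ∈ Ω') : gradient u (gradient ut y) = y := by
  obtain ⟨x, hx, rfl⟩ := hsol.2.2.2.1.surjOn hy
  rw [hleg.2.2 x hx]

theorem fderiv_gradient_comp_eq_id (hleg : IsLegendre n Ω Ω' u ut) (hsol : IsSol n Ω Ω' u c)
    (hΩ' : IsOpen Ω') (hy : y ∈ Ω') :
    (fderiv ℝ (gradient u) (gradient ut y)).comp (fderiv ℝ (gradient ut) y) =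
      ContinuousLinearMap.id ℝ (EuclideanSpace ℝ (Fin n)) := by
  have hut := differentiableAt_gradient (hleg.1.contDiffAt (subset_closure hy) 2)
  have hu := differentiableAt_gradient
    (hsol.1.contDiffAt (subset_closure (hleg.gradient_mem hsol hy)) 2)
  rw [← fderiv_comp y hu hut, ← fderiv_id (𝕜 := ℝ) (x := y)]
  refine Filter.EventuallyEq.fderiv_eq ?_
  filter_upwards [hΩ'.mem_nhds hy] with z hz using hleg.gradient_gradient hsol hz

theorem isDualSolutionAt (hleg : IsLegendre n Ω Ω' u ut) (hsol : IsSol n Ω Ω' u c)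
    (hΩ' : IsOpen Ω') (hy : y ∈ Ω') : IsDualSolutionAt (lorentzFrame n) c ut y := by
  have hmem := hleg.gradient_mem hsol hy
  have hinv := hleg.fderiv_gradient_comp_eq_id hsol hΩ' hy
  have hinv' : (fderiv ℝ (gradient ut) y).comp (fderiv ℝ (gradient u) (gradient ut y)) =
      ContinuousLinearMap.id ℝ (EuclideanSpace ℝ (Fin n)) :=
    ContinuousLinearMap.coe_injective <| (LinearMap.comp_eq_id_comm ℝ _).1 <|
      congrArg ContinuousLinearMap.toLinearMap hinv
  refine ⟨?_, .of_inverse hinv' hinv, ?_⟩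
  · rw [← ContinuousLinearMap.inverse_eq hinv hinv']
    exact isPositive_inverse (hsol.isPositive_fderiv_gradient hmem) (.of_inverse hinv hinv')
  · have hM := MOp_eq_sum_inner_lorentzFrame (hsol.1.contDiffAt (subset_closure hmem) 2)
      (hsol.2.1 _ (subset_closure hmem))
    rw [hsol.2.2.2.2 _ hmem, hleg.gradient_gradient hsol hy] at hM
    rw [ContinuousLinearMap.inverse_eq hinv' hinv, hM]

end IsLegendre

end LegendreTransform

theorem statement12_general (n : ℕ) (Ω Ω' : Set (EuclideanSpace ℝ (Fin n)))
    (hΩb : Bornology.IsBounded Ω) (hΩ' : IsOpen Ω') (hΩ'c : Convex ℝ Ω')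
    (hsub : closure Ω' ⊆ Metric.ball (0 : EuclideanSpace ℝ (Fin n)) 1) :
    ∃ C₁₇ : ℝ, 0 < C₁₇ ∧
      ∀ (u ut : EuclideanSpace ℝ (Fin n) → ℝ) (c : ℝ),
        IsSol n Ω Ω' u c → IsLegendre n Ω Ω' u ut →
        ∀ y ∈ Ω', ‖fderiv ℝ (gradient ut) y‖ ≤
          sSup ((fun z => ‖fderiv ℝ (gradient ut) z‖) '' frontier Ω') + C₁₇ := by
  have hcompact : IsCompact (closure Ω') := 
    (Metric.isBounded_ball.subset (subset_closure.trans hsub)).isCompact_closure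
  obtain ⟨R, hR, hΩR⟩ := hΩb.exists_pos_norm_le
  choose M hM using exists_norm_iteratedFDeriv_lorentzFrame_le hcompact hsub
  have hconst : 0 < (2 + ∑ k, M k ^ 2) * (R * 2) :=
    mul_pos (add_pos_of_pos_of_nonneg two_pos (Finset.sum_nonneg fun k _ => sq_nonneg (M k)))
      (mul_pos hR two_pos)
  refine ⟨_, hconst, fun u ut c hsol hleg y hy => ?_⟩
  have hball : ∀ x ∈ closure Ω', ‖x‖ < 1 := fun x hx => mem_ball_zero_iff.1 (hsub hx)
  have hsmooth : ∀ (m : ℕ), ∀ x ∈ closure Ω', ContDiffAt ℝ m ut x := fun m x hx =>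
    hleg.1.contDiffAt hx m
  have hosc : ∀ z ∈ closure Ω', ut z - ut y ≤ R * 2 := fun z hz => by
    have hle := sub_le_of_norm_gradient_le hΩ'c
      (fun x hx => (hsmooth 1 x (subset_closure hx)).differentiableAt one_ne_zero)
      (fun x hx => (hsmooth 0 x hx).continuousAt.continuousWithinAt)
      (fun x hx => hΩR _ (hleg.gradient_mem hsol hx)) hy hz
    have hzy : ‖z - y‖ ≤ 2 := by
      linarith [norm_sub_le z y, hball z hz, hball y (subset_closure hy)]
    exact hle.trans (mul_le_mul_of_nonneg_left hzy hR.le)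
  exact norm_fderiv_gradient_le_sSup_frontier_add hΩ' hcompact (hsmooth 4)
    (fun k x hx => contDiffAt_lorentzFrame k (hball x (subset_closure hx)))
    (fun k x hx => hM k x (subset_closure hx))
    (fun x hx => norm_sq_le_sum_inner_lorentzFrame_sq (hball x (subset_closure hx)))
    (fun x hx => hleg.isDualSolutionAt hsol hΩ' hx) hosc hy

/-- Lemma 4.2.  The interior bound on the Hessian of the Legendre
transform reduces to the boundary:  `sup_{Ω̃} ‖D²ũ‖ ≤ max_{∂Ω̃} ‖D²ũ‖ + C₁₇`. -/
theorem statement12 (n : ℕ) (hn : 2 ≤ n) (Ω Ω' : Set (EuclideanSpace ℝ (Fin n)))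
    (g h : EuclideanSpace ℝ (Fin n) → ℝ) (θ₁ θ₂ : ℝ)
    (hΩb : Bornology.IsBounded Ω) (hΩ'b : Bornology.IsBounded Ω')
    (hΩ : IsUnifConvexDefFn n Ω g θ₁) (hΩ' : IsUnifConvexDefFn n Ω' h θ₂)
    (hsub : closure Ω' ⊆ Metric.ball (0 : EuclideanSpace ℝ (Fin n)) 1) :
    ∃ C₁₇ : ℝ, 0 < C₁₇ ∧
      ∀ (u ut : EuclideanSpace ℝ (Fin n) → ℝ) (c : ℝ),
        IsSol n Ω Ω' u c → IsLegendre n Ω Ω' u ut →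
        ∀ y ∈ Ω', ‖fderiv ℝ (gradient ut) y‖ ≤
          sSup ((fun z => ‖fderiv ℝ (gradient ut) z‖) '' frontier Ω') + C₁₇ :=
  statement12_general n Ω Ω' hΩb hΩ'.isOpen hΩ'.convex hsub
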